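/- Let G be a graph on n vertices with adjacency matrix A and stability number α(G), and let k > 0 be a noninteger real scalar. Then the quadratic form q_{A,k}(x) := x^T (kA + kI - J) x has a strict local minimizer over the nonnegative orthant {x ∈ ℝ^n : x ≥ 0} if and only if α(G) < k. -/

import Mathlib

open Matrix
open scoped RealInnerProductSpace

/-- The stability (independence) number of a graph: the size of the largest set of
pairwise non-adjacent vertices. -/
noncomputable def stabilityNumber {V : Type*} (G : SimpleGraph V) : ℕ :=
  sSup {k | ∃ s : Finset V, s.card = k ∧ ∀ i ∈ s, ∀ j ∈ s, i ≠ j → ¬ G.Adj i j}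

/-- The matrix `M_{A,k} = k A + k I - J`, where `J` is the all-ones matrix. -/
noncomputable def MAk {n : ℕ} (A : Matrix (Fin n) (Fin n) ℝ) (k : ℝ) : Matrix (Fin n) (Fin n) ℝ :=
  k • A + k • (1 : Matrix (Fin n) (Fin n) ℝ) - Matrix.of (fun _ _ => (1 : ℝ))

/-- Entrywise square of a vector. -/
def vsq {n : ℕ} (x : Fin n → ℝ) : Fin n → ℝ := fun i => (x i) ^ 2

/-- A symmetric matrix `M` is copositive if `xᵀ M x ≥ 0` for all entrywise nonnegative `x`. -/
def Copositive {n : ℕ} (M : Matrix (Fin n) (Fin n) ℝ) : Prop :=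
  ∀ x : Fin n → ℝ, (∀ i, 0 ≤ x i) → 0 ≤ x ⬝ᵥ M.mulVec x

/-- The quartic form `p_M(x) = (x²)ᵀ M (x²)`. -/
noncomputable def quarticForm {n : ℕ} (M : Matrix (Fin n) (Fin n) ℝ) :
    EuclideanSpace ℝ (Fin n) → ℝ :=
  fun x => vsq x ⬝ᵥ M.mulVec (vsq x)

/-- The quadratic form `q_M(x) = xᵀ M x`. -/
noncomputable def quadForm {n : ℕ} (M : Matrix (Fin n) (Fin n) ℝ) :
    EuclideanSpace ℝ (Fin n) → ℝ :=
  fun x => x ⬝ᵥ M.mulVec x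

/-- `xm` is a local minimizer of `f` over `Ω`: `xm ∈ Ω` and there is `ε > 0` such that
`f xm ≤ f x` for all `x ∈ Ω` with `‖x - xm‖ ≤ ε` (Euclidean norm). -/
def IsLocalMinimizer {n : ℕ} (f : EuclideanSpace ℝ (Fin n) → ℝ)
    (Ω : Set (EuclideanSpace ℝ (Fin n))) (xm : EuclideanSpace ℝ (Fin n)) : Prop :=
  xm ∈ Ω ∧ ∃ ε > 0, ∀ x ∈ Ω, ‖x - xm‖ ≤ ε → f xm ≤ f x

/-- `xm` is a strict local minimizer of `f` over `Ω`: `xm ∈ Ω` and there is `ε > 0` such that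
`f xm < f x` for all `x ∈ Ω` with `x ≠ xm` and `‖x - xm‖ ≤ ε` (Euclidean norm). -/
def IsStrictLocalMinimizer {n : ℕ} (f : EuclideanSpace ℝ (Fin n) → ℝ)
    (Ω : Set (EuclideanSpace ℝ (Fin n))) (xm : EuclideanSpace ℝ (Fin n)) : Prop :=
  xm ∈ Ω ∧ ∃ ε > 0, ∀ x ∈ Ω, x ≠ xm → ‖x - xm‖ ≤ ε → f xm < f x

/-!
A function that is positively homogeneous of positive degree is monotone along rays, so a strict
local minimizer over a cone can only be the origin, and it is one exactly when the function is
positive on the rest of the cone. For `q_{A,k}` and the nonnegative orthant this is strict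
copositivity of `k (A + I) - J`, which the Motzkin–Straus inequality
`(∑ i, x i) ^ 2 ≤ α(G) * xᵀ (A + I) x` (for `x ≥ 0`) turns into `α(G) < k`: it gives strict
copositivity when `α(G) < k`, and the indicator vector of a maximum stable set, for which it is an
equality, gives the converse.
-/

open Filter Set SimpleGraph
open scoped Topology

section Homogeneous

variable {n p : ℕ} {f : EuclideanSpace ℝ (Fin n) → ℝ} {Ω : Set (EuclideanSpace ℝ (Fin n))}
  {xm : EuclideanSpace ℝ (Fin n)}

theorem IsStrictLocalMinimizer.eventually_lt (h : IsStrictLocalMinimizer f Ω xm) :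
    ∀ᶠ x in 𝓝[Ω \ {xm}] xm, f xm < f x := by
  obtain ⟨-, ε, hε, hlt⟩ := h
  filter_upwards [self_mem_nhdsWithin,
    mem_nhdsWithin_of_mem_nhds (Metric.closedBall_mem_nhds xm hε)] with x hx hxε
  exact hlt x hx.1 hx.2 (mem_closedBall_iff_norm.1 hxε)

theorem IsStrictLocalMinimizer.eq_zero_of_homogeneous (h : IsStrictLocalMinimizer f Ω xm)
    (hΩ : ∀ t : ℝ, 0 ≤ t → ∀ x ∈ Ω, t • x ∈ Ω) (hp : p ≠ 0)
    (hf : ∀ t : ℝ, 0 ≤ t → ∀ x ∈ Ω, f (t • x) = t ^ p * f x) : xm = 0 := by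
  by_contra hne
  have hnonneg : ∀ᶠ t : ℝ in 𝓝[≠] 1, 0 ≤ t :=
    mem_nhdsWithin_of_mem_nhds (Ici_mem_nhds one_pos)
  have htendsto : Tendsto (fun t : ℝ ↦ t • xm) (𝓝[≠] 1) (𝓝[Ω \ {xm}] xm) := by
    refine tendsto_nhdsWithin_iff.2 ⟨?_, ?_⟩
    · exact ((continuous_id.smul continuous_const).tendsto' 1 xm (one_smul ℝ xm)).mono_left
        nhdsWithin_le_nhds
    · filter_upwards [hnonneg, self_mem_nhdsWithin] with t ht ht1
      exact ⟨hΩ t ht xm h.1, fun heq ↦ ht1 (smul_left_injective ℝ hne (by simpa using heq))⟩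
  have hray : ∀ᶠ t : ℝ in 𝓝[≠] 1, 0 ≤ t ∧ f xm < t ^ p * f xm := by
    filter_upwards [hnonneg, htendsto.eventually h.eventually_lt] with t ht hlt
    exact ⟨ht, hf t ht xm h.1 ▸ hlt⟩
  have hpos : 0 < f xm := by
    obtain ⟨t, ⟨-, hlt⟩, ht1 : 1 < t⟩ :=
      ((hray.filter_mono (nhdsGT_le_nhdsNE 1)).and self_mem_nhdsWithin).exists
    nlinarith [one_lt_pow₀ ht1 hp]
  have hneg : f xm < 0 := by
    obtain ⟨t, ⟨ht0, hlt⟩, ht1 : t < 1⟩ :=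
      ((hray.filter_mono (nhdsLT_le_nhdsNE 1)).and self_mem_nhdsWithin).exists
    nlinarith [pow_lt_one₀ ht0 ht1 hp]
  exact hneg.not_gt hpos

theorem IsStrictLocalMinimizer.pos_of_homogeneous (h : IsStrictLocalMinimizer f Ω 0)
    (hΩ : ∀ t : ℝ, 0 ≤ t → ∀ x ∈ Ω, t • x ∈ Ω) (hp : p ≠ 0)
    (hf : ∀ t : ℝ, 0 ≤ t → ∀ x ∈ Ω, f (t • x) = t ^ p * f x)
    {x : EuclideanSpace ℝ (Fin n)} (hx : x ∈ Ω) (hx0 : x ≠ 0) : 0 < f x := by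
  have hf0 : f 0 = 0 := by simpa [hp] using hf 0 le_rfl x hx
  have htendsto : Tendsto (fun t : ℝ ↦ t • x) (𝓝[>] 0) (𝓝[Ω \ {0}] 0) := by
    refine tendsto_nhdsWithin_iff.2 ⟨?_, ?_⟩
    · exact ((continuous_id.smul continuous_const).tendsto' 0 0 (zero_smul ℝ x)).mono_left
        nhdsWithin_le_nhds
    · filter_upwards [self_mem_nhdsWithin] with t (ht : 0 < t)
      exact ⟨hΩ t ht.le x hx, smul_ne_zero ht.ne' hx0⟩
  obtain ⟨t, hlt, ht : 0 < t⟩ :=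
    ((htendsto.eventually h.eventually_lt).and self_mem_nhdsWithin).exists
  rw [hf0, hf t ht.le x hx] at hlt
  exact pos_of_mul_pos_right hlt (by positivity)

theorem exists_isStrictLocalMinimizer_iff_of_homogeneous (h0 : 0 ∈ Ω)
    (hΩ : ∀ t : ℝ, 0 ≤ t → ∀ x ∈ Ω, t • x ∈ Ω) (hp : p ≠ 0)
    (hf : ∀ t : ℝ, 0 ≤ t → ∀ x ∈ Ω, f (t • x) = t ^ p * f x) :
    (∃ xm, IsStrictLocalMinimizer f Ω xm) ↔ ∀ x ∈ Ω, x ≠ 0 → 0 < f x := by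
  constructor
  · rintro ⟨xm, h⟩ x hx hx0
    obtain rfl := h.eq_zero_of_homogeneous hΩ hp hf
    exact h.pos_of_homogeneous hΩ hp hf hx hx0
  · intro hpos
    have hf0 : f 0 = 0 := by simpa [hp] using hf 0 le_rfl 0 h0
    exact ⟨0, h0, 1, one_pos, fun x hx hx0 _ ↦ hf0 ▸ hpos x hx hx0⟩

end Homogeneous

/-- Strict copositivity: `xᵀ M x` is positive at every nonzero entrywise nonnegative vector `x`.
As for `Copositive`, symmetry of `M` is not part of the definition. -/
def StrictlyCopositive {V R : Type*} [Fintype V] [CommRing R] [PartialOrder R]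
    (M : Matrix V V R) : Prop :=
  ∀ x : V → R, 0 ≤ x → x ≠ 0 → 0 < x ⬝ᵥ M *ᵥ x

theorem quadForm_smul {n : ℕ} (M : Matrix (Fin n) (Fin n) ℝ) (t : ℝ)
    (x : EuclideanSpace ℝ (Fin n)) : quadForm M (t • x) = t ^ 2 * quadForm M x := by
  simp only [quadForm, WithLp.ofLp_smul, mulVec_smul, smul_dotProduct, dotProduct_smul, smul_eq_mul]
  ring

theorem exists_isStrictLocalMinimizer_quadForm_iff {n : ℕ} (M : Matrix (Fin n) (Fin n) ℝ) :
    (∃ xm, IsStrictLocalMinimizer (quadForm M)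
        {x : EuclideanSpace ℝ (Fin n) | ∀ i, 0 ≤ x i} xm) ↔ StrictlyCopositive M := by
  rw [exists_isStrictLocalMinimizer_iff_of_homogeneous
    (Ω := {x : EuclideanSpace ℝ (Fin n) | ∀ i, 0 ≤ x i}) (fun _ ↦ le_rfl)
    (fun t ht x hx i ↦ mul_nonneg ht (hx i)) two_ne_zero (fun t _ x _ ↦ quadForm_smul M t x)]
  constructor
  · intro hpos x hx hx0
    exact hpos (WithLp.toLp 2 x) hx ((WithLp.toLp_eq_zero 2).not.2 hx0)
  · intro hM x hx hx0
    exact hM x.ofLp hx ((WithLp.ofLp_eq_zero 2).not.2 hx0)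

theorem stabilityNumber_eq_indepNum {V : Type*} (G : SimpleGraph V) :
    stabilityNumber G = G.indepNum := by
  simp only [stabilityNumber, indepNum, isNIndepSet_iff, Set.Pairwise, Finset.mem_coe,
    and_comm, Ne, imp_forall_iff]

section WeightShift

variable {V R : Type*} [DecidableEq V] [CommRing R]

/-- The weight vector obtained from `x` by moving the whole weight of `j` onto `i`; it is meant for
`i ≠ j`. -/
def shiftWeight (x : V → R) (i j : V) : V → R :=
  x + x j • (Pi.single i 1 - Pi.single j 1)

theorem shiftWeight_apply_left (x : V → R) {i j : V} (hij : i ≠ j) :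
    shiftWeight x i j i = x i + x j := by
  simp [shiftWeight, hij]

theorem shiftWeight_apply_right (x : V → R) {i j : V} (hij : i ≠ j) :
    shiftWeight x i j j = 0 := by
  simp [shiftWeight, hij.symm]

theorem shiftWeight_apply_of_ne (x : V → R) {i j l : V} (hi : l ≠ i) (hj : l ≠ j) :
    shiftWeight x i j l = x l := by
  simp [shiftWeight, hi, hj]

theorem shiftWeight_nonneg [PartialOrder R] [IsOrderedRing R] {x : V → R} (hx : 0 ≤ x) {i j : V}
    (hij : i ≠ j) : 0 ≤ shiftWeight x i j := by
  intro l
  obtain rfl | hi := eq_or_ne l i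
  · exact shiftWeight_apply_left x hij ▸ add_nonneg (hx l) (hx j)
  obtain rfl | hj := eq_or_ne l j
  · exact (shiftWeight_apply_right x hij).ge
  · exact shiftWeight_apply_of_ne x hi hj ▸ hx l

theorem support_shiftWeight_ssubset {x : V → R} {i j : V} (hij : i ≠ j) (hi : x i ≠ 0)
    (hj : x j ≠ 0) : Function.support (shiftWeight x i j) ⊂ Function.support x := by
  refine (ssubset_iff_of_subset fun l hl ↦ ?_).2
    ⟨j, hj, Function.notMem_support.2 (shiftWeight_apply_right x hij)⟩
  obtain rfl | hli := eq_or_ne l i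
  · exact hi
  obtain rfl | hlj := eq_or_ne l j
  · exact hj
  · rwa [Function.mem_support, shiftWeight_apply_of_ne x hli hlj] at hl

variable [Fintype V]

theorem sum_shiftWeight (x : V → R) (i j : V) : ∑ l, shiftWeight x i j l = ∑ l, x l := by
  simp [shiftWeight, Finset.sum_add_distrib, ← Finset.mul_sum]

theorem dotProduct_mulVec_shiftWeight {B : Matrix V V R} (hB : B.IsSymm) (x : V → R) (i j : V) :
    shiftWeight x i j ⬝ᵥ B *ᵥ shiftWeight x i j =
      x ⬝ᵥ B *ᵥ x + 2 * x j * ((B *ᵥ x) i - (B *ᵥ x) j) +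
        x j ^ 2 * (B i i + B j j - 2 * B i j) := by
  set d : V → R := Pi.single i 1 - Pi.single j 1 with hd
  have hd_dot (v : V → R) : d ⬝ᵥ v = v i - v j := by simp [hd, sub_dotProduct]
  have hd_quad : d ⬝ᵥ B *ᵥ d = B i i + B j j - 2 * B i j := by
    rw [hd_dot, hd, mulVec_sub, mulVec_single_one, mulVec_single_one]
    simp only [Pi.sub_apply, col_apply, hB.apply i j]
    ring
  have hcross : x ⬝ᵥ B *ᵥ d = d ⬝ᵥ B *ᵥ x := by
    rw [dotProduct_mulVec, ← mulVec_transpose, hB.eq, dotProduct_comm]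
  rw [← hd_dot, ← hd_quad, shiftWeight, ← hd]
  simp only [mulVec_add, mulVec_smul, add_dotProduct, dotProduct_add, smul_dotProduct,
    dotProduct_smul, smul_eq_mul, hcross]
  ring

end WeightShift

section MotzkinStraus

theorem sq_sum_le_indepNum_mul_sum_sq {V R : Type*} [Fintype V] [CommRing R] [LinearOrder R]
    [IsStrictOrderedRing R] (G : SimpleGraph V) {x : V → R}
    (hx : G.IsIndepSet (Function.support x)) :
    (∑ i, x i) ^ 2 ≤ G.indepNum * ∑ i, x i ^ 2 := by
  set s : Finset V := {i | x i ≠ 0} with hs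
  have hs_support : (s : Set V) = Function.support x := by simp [hs, Function.support]
  have hcard : s.card ≤ G.indepNum := IsIndepSet.card_le_indepNum (hs_support ▸ hx)
  calc (∑ i, x i) ^ 2 = (∑ i ∈ s, x i) ^ 2 := by rw [hs, Finset.sum_filter_ne_zero]
    _ ≤ s.card * ∑ i ∈ s, x i ^ 2 := sq_sum_le_card_mul_sum_sq
    _ ≤ G.indepNum * ∑ i, x i ^ 2 := by
      gcongr
      exact s.subset_univ

variable {V R : Type*} [Fintype V] [DecidableEq V] [CommRing R]
  (G : SimpleGraph V) [DecidableRel G.Adj]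

theorem dotProduct_adjMatrix_add_one_mulVec_of_isIndepSet_support {x : V → R}
    (hx : G.IsIndepSet (Function.support x)) :
    x ⬝ᵥ (G.adjMatrix R + 1) *ᵥ x = ∑ i, x i ^ 2 := by
  have hadj : x ⬝ᵥ G.adjMatrix R *ᵥ x = 0 := by
    rw [dotProduct_mulVec_adjMatrix]
    refine Finset.sum_eq_zero fun i _ ↦ Finset.sum_eq_zero fun j _ ↦ ?_
    split_ifs with hij
    · by_contra hne
      exact hx (left_ne_zero_of_mul hne) (right_ne_zero_of_mul hne) hij.ne hij
    · rfl
  rw [add_mulVec, dotProduct_add, hadj, one_mulVec, zero_add]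
  simp only [dotProduct, sq]

variable [LinearOrder R] [IsStrictOrderedRing R]

-- Shifting weight along an edge `ij` changes `xᵀ (A + I) x` linearly, because the second-order
-- coefficient is `1 + 1 - 2`; hence one of the two directions does not increase it.
theorem exists_shiftWeight_dotProduct_mulVec_le {x : V → R} (hx : 0 ≤ x)
    (hdep : ¬ G.IsIndepSet (Function.support x)) :
    ∃ i j, i ≠ j ∧ x i ≠ 0 ∧ x j ≠ 0 ∧
      shiftWeight x i j ⬝ᵥ (G.adjMatrix R + 1) *ᵥ shiftWeight x i j ≤
        x ⬝ᵥ (G.adjMatrix R + 1) *ᵥ x := by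
  set B := G.adjMatrix R + 1 with hB
  have hB_symm : B.IsSymm := G.isSymm_adjMatrix.add isSymm_one
  obtain ⟨i, j, hi, hj, hadj, hle⟩ :
      ∃ i j, x i ≠ 0 ∧ x j ≠ 0 ∧ G.Adj i j ∧ (B *ᵥ x) i ≤ (B *ᵥ x) j := by
    simp only [Set.Pairwise, not_forall, not_not] at hdep
    obtain ⟨i, hi, j, hj, -, hadj⟩ := hdep
    obtain hle | hle := le_total ((B *ᵥ x) i) ((B *ᵥ x) j)
    · exact ⟨i, j, hi, hj, hadj, hle⟩
    · exact ⟨j, i, hj, hi, hadj.symm, hle⟩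
  have hcurv : B i i + B j j - 2 * B i j = 0 := by
    simp [hB, hadj, hadj.ne, one_add_one_eq_two]
  refine ⟨i, j, hadj.ne, hi, hj, ?_⟩
  rw [dotProduct_mulVec_shiftWeight hB_symm, hcurv]
  nlinarith [mul_nonneg (hx j) (sub_nonneg.2 hle)]

theorem exists_isIndepSet_support_dotProduct_mulVec_le {x : V → R} (hx : 0 ≤ x) :
    ∃ y : V → R, G.IsIndepSet (Function.support y) ∧ ∑ i, y i = ∑ i, x i ∧
      y ⬝ᵥ (G.adjMatrix R + 1) *ᵥ y ≤ x ⬝ᵥ (G.adjMatrix R + 1) *ᵥ x := by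
  induction hs : Function.support x using WellFoundedLT.induction generalizing x with
  | ind s ih =>
    subst hs
    by_cases hindep : G.IsIndepSet (Function.support x)
    · exact ⟨x, hindep, rfl, le_rfl⟩
    · obtain ⟨i, j, hij, hi, hj, hle⟩ := exists_shiftWeight_dotProduct_mulVec_le G hx hindep
      obtain ⟨y, hy, hsum, hy_le⟩ :=
        ih _ (support_shiftWeight_ssubset hij hi hj) (shiftWeight_nonneg hx hij) rfl
      exact ⟨y, hy, hsum.trans (sum_shiftWeight x i j), hy_le.trans hle⟩

theorem sq_sum_le_indepNum_mul_dotProduct_mulVec {x : V → R} (hx : 0 ≤ x) :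
    (∑ i, x i) ^ 2 ≤ G.indepNum * (x ⬝ᵥ (G.adjMatrix R + 1) *ᵥ x) := by
  obtain ⟨y, hy, hsum, hle⟩ := exists_isIndepSet_support_dotProduct_mulVec_le G hx
  calc (∑ i, x i) ^ 2 = (∑ i, y i) ^ 2 := by rw [hsum]
    _ ≤ G.indepNum * ∑ i, y i ^ 2 := sq_sum_le_indepNum_mul_sum_sq G hy
    _ = G.indepNum * (y ⬝ᵥ (G.adjMatrix R + 1) *ᵥ y) := by
      rw [dotProduct_adjMatrix_add_one_mulVec_of_isIndepSet_support G hy]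
    _ ≤ G.indepNum * (x ⬝ᵥ (G.adjMatrix R + 1) *ᵥ x) := by gcongr

end MotzkinStraus

section StrictCopositivity

variable {V R : Type*} [Fintype V] [DecidableEq V] [CommRing R]
  (G : SimpleGraph V) [DecidableRel G.Adj]

theorem dotProduct_smul_adjMatrix_sub_mulVec (k : R) (x : V → R) :
    x ⬝ᵥ (k • G.adjMatrix R + k • 1 - Matrix.of fun _ _ ↦ 1) *ᵥ x =
      k * (x ⬝ᵥ (G.adjMatrix R + 1) *ᵥ x) - (∑ i, x i) ^ 2 := by
  have hJ : x ⬝ᵥ (Matrix.of fun _ _ ↦ (1 : R)) *ᵥ x = (∑ i, x i) ^ 2 := by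
    simp [dotProduct, mulVec, ← Finset.sum_mul, sq]
  rw [← smul_add, sub_mulVec, dotProduct_sub, hJ, smul_mulVec, dotProduct_smul, smul_eq_mul]

variable [LinearOrder R] [IsStrictOrderedRing R] {G} {k : R}

theorem strictlyCopositive_of_indepNum_lt (hk : (G.indepNum : R) < k) :
    StrictlyCopositive (k • G.adjMatrix R + k • 1 - Matrix.of fun _ _ ↦ 1) := by
  intro x hx hx0
  have hsum : 0 < ∑ i, x i := Fintype.sum_pos (hx.lt_of_ne' hx0)
  have hMS := sq_sum_le_indepNum_mul_dotProduct_mulVec G hx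
  have hquad : 0 < x ⬝ᵥ (G.adjMatrix R + 1) *ᵥ x :=
    pos_of_mul_pos_right ((pow_pos hsum 2).trans_le hMS) (Nat.cast_nonneg _)
  rw [dotProduct_smul_adjMatrix_sub_mulVec, sub_pos]
  exact hMS.trans_lt (mul_lt_mul_of_pos_right hk hquad)

theorem indepNum_lt_of_strictlyCopositive (hk : 0 < k)
    (h : StrictlyCopositive (k • G.adjMatrix R + k • 1 - Matrix.of fun _ _ ↦ 1)) :
    (G.indepNum : R) < k := by
  obtain ⟨s, hs⟩ := G.exists_isNIndepSet_indepNum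
  obtain rfl | hne := s.eq_empty_or_nonempty
  · simpa [← hs.card_eq] using hk
  set x : V → R := (s : Set V).indicator 1 with hx
  have hsupp : Function.support x = s := by simp [hx]
  have hx0 : x ≠ 0 := Function.support_nonempty_iff.1 (hsupp ▸ hne)
  have hsum : ∑ i, x i = G.indepNum := by simp [hx, Set.indicator_apply, hs.card_eq]
  have hsum_sq : ∑ i, x i ^ 2 = G.indepNum := by simp [hx, Set.indicator_apply, hs.card_eq]
  have hpos := h x (Set.indicator_nonneg fun _ _ ↦ zero_le_one) hx0
  rw [dotProduct_smul_adjMatrix_sub_mulVec,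
    dotProduct_adjMatrix_add_one_mulVec_of_isIndepSet_support G (hsupp ▸ hs.isIndepSet), hsum,
    hsum_sq, sub_pos, sq] at hpos
  exact lt_of_mul_lt_mul_right hpos (Nat.cast_nonneg _)

end StrictCopositivity

theorem qAk_has_strictLocalMinimizer_iff_general {n : ℕ} (G : SimpleGraph (Fin n))
    [DecidableRel G.Adj] (k : ℝ) (hk : 0 < k) :
    (∃ xm, IsStrictLocalMinimizer (quadForm (MAk (G.adjMatrix ℝ) k))
        {x : EuclideanSpace ℝ (Fin n) | ∀ i, 0 ≤ x i} xm) ↔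
      (stabilityNumber G : ℝ) < k := by
  rw [exists_isStrictLocalMinimizer_quadForm_iff, stabilityNumber_eq_indepNum]
  exact ⟨indepNum_lt_of_strictlyCopositive hk, strictlyCopositive_of_indepNum_lt⟩

/-- For `k > 0` noninteger, the quadratic form `q_{A,k}(x) = xᵀ(kA + kI - J)x` has a strict
local minimizer over the nonnegative orthant iff `α(G) < k`. -/
theorem qAk_has_strictLocalMinimizer_iff {n : ℕ} (G : SimpleGraph (Fin n)) [DecidableRel G.Adj]
    (k : ℝ) (hk : 0 < k) (hk' : ∀ m : ℤ, (m : ℝ) ≠ k) :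
    (∃ xm, IsStrictLocalMinimizer (quadForm (MAk (G.adjMatrix ℝ) k))
        {x : EuclideanSpace ℝ (Fin n) | ∀ i, 0 ≤ x i} xm) ↔
      (stabilityNumber G : ℝ) < k := by
  exact qAk_has_strictLocalMinimizer_iff_general G k hk
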